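/- arXiv:1804.01135 — 3 statements merged into one kernel-verified Lean document; each statement's English description precedes it below -/
import Mathlib

section
/- Let Ω ⊆ ℝ^d (d ≥ 1) be open, let D_x be C¹ on Ω, let σ_{x,a}, σ_{x,f} : Ω → ℝ, and let u₀ be C² on Ω with u₀ > 0, satisfying -∇·(D_x∇u₀) + (σ_{x,a} + σ_{x,f})u₀ = 0 pointwise in Ω. Let γ_x, β_x, β_f ∈ ℝ with β_f ≠ 0 and γ_x = -β_f, and define Q := γ_x D_x |∇u₀|² + (β_x σ_{x,a} + β_f σ_{x,f}) u₀² and μ := β_x/β_f - 1. Then the function Φ := log u₀ satisfies the Yamabe-type equation ∇·(D_x∇Φ) = -σ_{x,a} μ + (Q/β_f) e^{-2Φ} pointwise in Ω. -/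
/-!
Since `∇(φ ∘ u) = φ'(u) ∇u`, the product rule gives
`∇·(a ∇(φ ∘ u)) = φ'(u) ∇·(a ∇u) + φ''(u) a |∇u|²`. For `φ = log` the diffusion equation turns the
first term into `σxa + σxf`, and since `γx = -βf` the second term `-a |∇u|² / u²` is the gradient
part of `(Q / βf) e^{-2Φ}`; what is left over is `-μ σxa`.
-/

open Real Set MeasureTheory Filter Topology

/-- Divergence-form operator `∇·(a∇u)(x) = ∑ i ∂_i (a ∂_i u)(x)`. -/
noncomputable def divA {d : ℕ} (a u : EuclideanSpace ℝ (Fin d) → ℝ)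
    (x : EuclideanSpace ℝ (Fin d)) : ℝ :=
  ∑ i : Fin d,
    fderiv ℝ (fun y => a y * fderiv ℝ u y (EuclideanSpace.single i (1 : ℝ))) x
      (EuclideanSpace.single i (1 : ℝ))

/-- Squared Euclidean norm of the gradient `|∇u|²(x)`. -/
noncomputable def gradSq {d : ℕ} (u : EuclideanSpace ℝ (Fin d) → ℝ)
    (x : EuclideanSpace ℝ (Fin d)) : ℝ :=
  ∑ i : Fin d, (fderiv ℝ u x (EuclideanSpace.single i (1 : ℝ))) ^ 2

theorem contDiffOn_mul_fderiv_apply {𝕜 E : Type*} [NontriviallyNormedField 𝕜]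
    [NormedAddCommGroup E] [NormedSpace 𝕜 E] {s : Set E} {a u : E → 𝕜} {m n : WithTop ℕ∞}
    (hs : IsOpen s) (ha : ContDiffOn 𝕜 m a s) (hu : ContDiffOn 𝕜 n u s) (hmn : m + 1 ≤ n) (v : E) :
    ContDiffOn 𝕜 m (fun y => a y * fderiv 𝕜 u y v) s :=
  ha.mul ((hu.fderiv_of_isOpen hs hmn).clm_apply contDiffOn_const)

section ChainRule

variable {d : ℕ} {a b u : EuclideanSpace ℝ (Fin d) → ℝ} {x : EuclideanSpace ℝ (Fin d)}

theorem divA_mul_left (hb : DifferentiableAt ℝ b x)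
    (hflux : ∀ i, DifferentiableAt ℝ
      (fun y => a y * fderiv ℝ u y (EuclideanSpace.single i (1 : ℝ))) x) :
    divA (fun y => b y * a y) u x
      = b x * divA a u x + a x * ∑ i, fderiv ℝ b x (EuclideanSpace.single i (1 : ℝ))
          * fderiv ℝ u x (EuclideanSpace.single i (1 : ℝ)) := by
  unfold divA
  rw [Finset.mul_sum, Finset.mul_sum, ← Finset.sum_add_distrib]
  refine Finset.sum_congr rfl fun i _ => ?_
  simp only [mul_assoc]
  rw [fderiv_fun_mul hb (hflux i)]
  simp only [add_apply, smul_apply, smul_eq_mul]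
  ring

theorem divA_comp_eq_divA_mul {φ φ' : ℝ → ℝ} (hφ : ∀ᶠ y in 𝓝 x, HasDerivAt φ (φ' (u y)) (u y))
    (hu : ∀ᶠ y in 𝓝 x, DifferentiableAt ℝ u y) :
    divA a (fun y => φ (u y)) x = divA (fun y => φ' (u y) * a y) u x := by
  refine Finset.sum_congr rfl fun i _ => ?_
  congr 1
  refine EventuallyEq.fderiv_eq ?_
  filter_upwards [hφ, hu] with y hφy huy
  have hgrad : fderiv ℝ (fun z => φ (u z)) y = φ' (u y) • fderiv ℝ u y :=
    (hφy.comp_hasFDerivAt y huy.hasFDerivAt).fderiv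
  rw [hgrad, smul_apply, smul_eq_mul]
  ring

theorem divA_comp {φ φ' : ℝ → ℝ} {φ'' : ℝ} (hφ : ∀ᶠ t in 𝓝 (u x), HasDerivAt φ (φ' t) t)
    (hφ' : HasDerivAt φ' φ'' (u x)) (hu : ∀ᶠ y in 𝓝 x, DifferentiableAt ℝ u y)
    (hflux : ∀ i, DifferentiableAt ℝ
      (fun y => a y * fderiv ℝ u y (EuclideanSpace.single i (1 : ℝ))) x) :
    divA a (fun y => φ (u y)) x = φ' (u x) * divA a u x + φ'' * a x * gradSq u x := by
  have hux : DifferentiableAt ℝ u x := hu.self_of_nhds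
  have hb : HasFDerivAt (fun y => φ' (u y)) (φ'' • fderiv ℝ u x) x :=
    hφ'.comp_hasFDerivAt x hux.hasFDerivAt
  rw [divA_comp_eq_divA_mul (hux.continuousAt.eventually hφ) hu,
    divA_mul_left hb.differentiableAt hflux, hb.fderiv]
  simp only [gradSq, smul_apply, smul_eq_mul, mul_assoc, ← Finset.mul_sum, sq]
  ring

theorem divA_log (hux : u x ≠ 0) (hu : ∀ᶠ y in 𝓝 x, DifferentiableAt ℝ u y)
    (hflux : ∀ i, DifferentiableAt ℝ
      (fun y => a y * fderiv ℝ u y (EuclideanSpace.single i (1 : ℝ))) x) :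
    divA a (fun y => Real.log (u y)) x
      = divA a u x / u x - a x * gradSq u x / u x ^ 2 := by
  have hlog : ∀ᶠ t in 𝓝 (u x), HasDerivAt Real.log t⁻¹ t :=
    (eventually_ne_nhds hux).mono fun _ => Real.hasDerivAt_log
  rw [divA_comp hlog (hasDerivAt_inv hux) hu hflux]
  ring

end ChainRule

theorem exp_neg_two_mul_log {t : ℝ} (ht : 0 < t) : Real.exp (-2 * Real.log t) = (t ^ 2)⁻¹ := by
  have hlog : -2 * Real.log t = Real.log (t ^ 2)⁻¹ := by
    rw [Real.log_inv, Real.log_pow, Nat.cast_ofNat, neg_mul]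
  rw [hlog, Real.exp_log (inv_pos.mpr (pow_pos ht 2))]

theorem stmt2_general {d : ℕ} {Ω : Set (EuclideanSpace ℝ (Fin d))} (hΩ : IsOpen Ω)
    {Dx σxa σxf u₀ : EuclideanSpace ℝ (Fin d) → ℝ} (hu : DifferentiableOn ℝ u₀ Ω)
    (hflux : ∀ i, DifferentiableOn ℝ
      (fun y => Dx y * fderiv ℝ u₀ y (EuclideanSpace.single i (1 : ℝ))) Ω)
    (hupos : ∀ x ∈ Ω, 0 < u₀ x)
    (hdiff : ∀ x ∈ Ω, -divA Dx u₀ x + (σxa x + σxf x) * u₀ x = 0)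
    {γx βx βf : ℝ} (hβf : βf ≠ 0) (hγ : γx = -βf)
    {Q : EuclideanSpace ℝ (Fin d) → ℝ}
    (hQ : ∀ x, Q x = γx * Dx x * gradSq u₀ x
        + (βx * σxa x + βf * σxf x) * (u₀ x) ^ 2)
    {μ : ℝ} (hμ : μ = βx / βf - 1) :
    ∀ x ∈ Ω,
      divA Dx (fun y => Real.log (u₀ y)) x
        = -σxa x * μ + (Q x / βf) * Real.exp (-2 * Real.log (u₀ x)) := by
  intro x hx
  have hΩx : Ω ∈ 𝓝 x := hΩ.mem_nhds hx
  have hux : u₀ x ≠ 0 := (hupos x hx).ne'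
  have hdiv : divA Dx u₀ x = (σxa x + σxf x) * u₀ x := by linarith [hdiff x hx]
  rw [divA_log hux (hu.eventually_differentiableAt hΩx) fun i => (hflux i).differentiableAt hΩx,
    exp_neg_two_mul_log (hupos x hx), hdiv, hQ, hμ, hγ]
  field_simp
  ring

theorem stmt2 {d : ℕ} (hd : 1 ≤ d) (Ω : Set (EuclideanSpace ℝ (Fin d)))
    (hΩ : IsOpen Ω) (Dx σxa σxf u₀ : EuclideanSpace ℝ (Fin d) → ℝ)
    (hD : ContDiffOn ℝ 1 Dx Ω) (hu : ContDiffOn ℝ 2 u₀ Ω)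
    (hupos : ∀ x ∈ Ω, 0 < u₀ x)
    (hdiff : ∀ x ∈ Ω, -divA Dx u₀ x + (σxa x + σxf x) * u₀ x = 0)
    (γx βx βf : ℝ) (hβf : βf ≠ 0) (hγ : γx = -βf)
    (Q : EuclideanSpace ℝ (Fin d) → ℝ)
    (hQ : ∀ x, Q x = γx * Dx x * gradSq u₀ x
        + (βx * σxa x + βf * σxf x) * (u₀ x) ^ 2)
    (μ : ℝ) (hμ : μ = βx / βf - 1) :
    ∀ x ∈ Ω,
      divA Dx (fun y => Real.log (u₀ y)) x
        = -σxa x * μ + (Q x / βf) * Real.exp (-2 * Real.log (u₀ x)) :=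
  have hflux := contDiffOn_mul_fderiv_apply hΩ hD hu one_add_one_eq_two.le
  stmt2_general hΩ (hu.differentiableOn two_ne_zero)
    (fun i => (hflux (EuclideanSpace.single i 1)).differentiableOn one_ne_zero)
    hupos hdiff hβf hγ hQ hμ
end

section
/- Assume θ < 0 with θ ≠ -1, and b ≥ 0, c ≥ 0 on Ω. If Ψ₁, Ψ₂ ∈ C²(Ω) ∩ C¹(cl(Ω)) are both classical solutions of (★) in Ω with Ψ₁ = Ψ₂ on ∂Ω, then Ψ₁ = Ψ₂ everywhere in Ω. -/
/-! Because `-θ > 0`, the right-hand side of the equation is monotone in the unknown, so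
uniqueness is a comparison principle: where `w = Ψ₁ - Ψ₂` is positive, `∇·(a∇w) ≥ 0`. This alone
does not exclude a positive interior maximum, because the inequality is not strict. The exponential
`h(y) = exp(μ y_k)` satisfies `∇·(a∇h) = μ h (∂_k a + μ a) > 0` once `μ > 0` exceeds the supremum
of `-(∂_k a)/a`. If `w` were positive somewhere, then for a small `ε > 0` the function `w + ε h`
would still attain its maximum inside `Ω` at a point where `w > 0`, and there
`∇·(a∇(w + ε h)) > 0` would contradict the second derivative test. -/

open Real Set MeasureTheory Filter Topology

/-- `s_θ(z) = sign(z)·|z|^{-θ}`, so `s_θ(z) = z^{-θ}` for `z > 0` and `s_θ(0) = 0`. -/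
noncomputable def sTheta (θ z : ℝ) : ℝ := Real.sign z * |z| ^ (-θ)

lemma sTheta_of_pos {θ z : ℝ} (hz : 0 < z) : sTheta θ z = z ^ (-θ) := by
  rw [sTheta, Real.sign_of_pos hz, one_mul, abs_of_pos hz]

lemma monotone_sTheta {θ : ℝ} (hθ : θ ≤ 0) : Monotone (sTheta θ) := by
  refine monotone_of_odd_of_monotoneOn_nonneg (fun z => ?_) fun y hy z _ hyz => ?_
  · simp only [sTheta, Real.sign_neg, abs_neg, neg_mul]
  · rcases hyz.eq_or_lt with rfl | hlt
    · exact le_rfl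
    · have hz : 0 < z := (mem_Ici.mp hy).trans_lt hlt
      rw [sTheta_of_pos hz]
      rcases (mem_Ici.mp hy).eq_or_lt with rfl | hypos
      · rw [sTheta, Real.sign_zero, zero_mul]
        positivity
      · rw [sTheta_of_pos hypos]
        exact Real.rpow_le_rpow hypos.le hyz (neg_nonneg.mpr hθ)

section SecondDerivativeTest

lemma deriv_deriv_nonpos_of_isLocalMax {f : ℝ → ℝ} {x : ℝ} (hf : ContinuousAt f x)
    (hmax : IsLocalMax f x) : deriv (deriv f) x ≤ 0 := by
  by_contra! hpos
  have hmin : IsLocalMin f x := isLocalMin_of_deriv_deriv_pos hpos hmax.deriv_eq_zero hf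
  have hconst : f =ᶠ[𝓝 x] fun _ => f x := by
    filter_upwards [hmax, hmin] with y hle hge using le_antisymm hle hge
  have hzero : deriv (deriv f) x = 0 := by
    simp only [hconst.deriv.deriv_eq, deriv_const', deriv_const]
  exact hpos.ne' hzero

variable {E F : Type*} [NormedAddCommGroup E] [NormedSpace ℝ E] [NormedAddCommGroup F]
  [NormedSpace ℝ F] {x : E}

lemma eventually_differentiableAt_of_contDiffAt_two {u : E → F} (hu : ContDiffAt ℝ 2 u x) :
    ∀ᶠ y in 𝓝 x, DifferentiableAt ℝ u y := by
  filter_upwards [hu.eventually (by decide)] with y hy using hy.differentiableAt two_ne_zero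

lemma differentiableAt_fderiv_apply {u : E → F} (hu : ContDiffAt ℝ 2 u x) (e : E) :
    DifferentiableAt ℝ (fun y => fderiv ℝ u y e) x :=
  ((hu.fderiv_right (m := 1) one_add_one_eq_two.le).differentiableAt one_ne_zero).clm_apply
    (differentiableAt_const e)

lemma fderiv_fderiv_apply_nonpos_of_isLocalMax {u : E → ℝ} (hu : ContDiffAt ℝ 2 u x)
    (hmax : IsLocalMax u x) (e : E) : fderiv ℝ (fun y => fderiv ℝ u y e) x e ≤ 0 := by
  let line : ℝ → E := fun t => x + t • e
  have hline (t : ℝ) : HasDerivAt line e t := by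
    simpa only [one_smul] using ((hasDerivAt_id' t).smul_const e).const_add x
  have hline_zero : line 0 = x := by simp only [line, zero_smul, add_zero]
  have hcont : ContinuousAt line 0 := (hline 0).continuousAt
  rw [← hline_zero] at hu hmax ⊢
  have hfirst : deriv (u ∘ line) =ᶠ[𝓝 0] fun t => fderiv ℝ u (line t) e := by
    filter_upwards [hcont.eventually (eventually_differentiableAt_of_contDiffAt_two hu)] with t ht
      using (ht.hasFDerivAt.comp_hasDerivAt t (hline t)).deriv
  have hsecond : deriv (deriv (u ∘ line)) 0 = fderiv ℝ (fun y => fderiv ℝ u y e) (line 0) e :=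
    hfirst.deriv_eq.trans
      ((differentiableAt_fderiv_apply hu e).hasFDerivAt.comp_hasDerivAt 0 (hline 0)).deriv
  rw [← hsecond]
  exact deriv_deriv_nonpos_of_isLocalMax (hu.continuousAt.comp hcont) (hmax.comp_continuous hcont)

end SecondDerivativeTest

section DivA

variable {d : ℕ} {a u v : EuclideanSpace ℝ (Fin d) → ℝ} {x : EuclideanSpace ℝ (Fin d)}

lemma divA_add (ha : DifferentiableAt ℝ a x) (hu : ContDiffAt ℝ 2 u x) (hv : ContDiffAt ℝ 2 v x) :
    divA a (u + v) x = divA a u x + divA a v x := by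
  unfold divA
  rw [← Finset.sum_add_distrib]
  refine Finset.sum_congr rfl fun i _ => ?_
  set e := EuclideanSpace.single i (1 : ℝ)
  have hflux : (fun y => a y * fderiv ℝ (u + v) y e)
      =ᶠ[𝓝 x] fun y => a y * fderiv ℝ u y e + a y * fderiv ℝ v y e := by
    filter_upwards [eventually_differentiableAt_of_contDiffAt_two hu,
      eventually_differentiableAt_of_contDiffAt_two hv] with y huy hvy
    rw [fderiv_add huy hvy, add_apply, mul_add]
  rw [hflux.fderiv_eq, fderiv_fun_add (ha.fun_mul (differentiableAt_fderiv_apply hu e))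
    (ha.fun_mul (differentiableAt_fderiv_apply hv e)), add_apply]

lemma divA_const_smul (r : ℝ) : divA a (r • u) x = r * divA a u x := by
  unfold divA
  rw [Finset.mul_sum]
  refine Finset.sum_congr rfl fun i _ => ?_
  set e := EuclideanSpace.single i (1 : ℝ)
  have hflux : (fun y => a y * fderiv ℝ (r • u) y e) = r • fun y => a y * fderiv ℝ u y e := by
    funext y
    simp only [fderiv_const_smul_field, Pi.smul_apply, smul_apply, smul_eq_mul, mul_left_comm]
  rw [hflux, fderiv_const_smul_field, Pi.smul_apply, smul_apply, smul_eq_mul]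

lemma divA_sub (ha : DifferentiableAt ℝ a x) (hu : ContDiffAt ℝ 2 u x) (hv : ContDiffAt ℝ 2 v x) :
    divA a (u - v) x = divA a u x - divA a v x := by
  have hneg : ContDiffAt ℝ 2 ((-1 : ℝ) • v) x := hv.const_smul (-1 : ℝ)
  rw [sub_eq_add_neg, ← neg_one_smul ℝ v, divA_add ha hu hneg, divA_const_smul,
    neg_one_mul, ← sub_eq_add_neg]

lemma divA_nonpos_of_isLocalMax (ha : DifferentiableAt ℝ a x) (hax : 0 ≤ a x)
    (hu : ContDiffAt ℝ 2 u x) (hmax : IsLocalMax u x) : divA a u x ≤ 0 := by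
  refine Finset.sum_nonpos fun i _ => ?_
  set e := EuclideanSpace.single i (1 : ℝ)
  have hflux : fderiv ℝ (fun y => a y * fderiv ℝ u y e) x e
      = a x * fderiv ℝ (fun y => fderiv ℝ u y e) x e := by
    rw [fderiv_fun_mul ha (differentiableAt_fderiv_apply hu e), hmax.fderiv_eq_zero]
    simp only [add_apply, smul_apply, zero_apply, smul_eq_mul, zero_mul, add_zero]
  rw [hflux]
  exact mul_nonpos_of_nonneg_of_nonpos hax (fderiv_fderiv_apply_nonpos_of_isLocalMax hu hmax e)

lemma divA_exp_const_mul (ha : DifferentiableAt ℝ a x) (k : Fin d) (μ : ℝ) :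
    divA a (fun y => exp (μ * y k)) x
      = μ * exp (μ * x k) * (fderiv ℝ a x (EuclideanSpace.single k (1 : ℝ)) + μ * a x) := by
  have hexp (y : EuclideanSpace ℝ (Fin d)) : HasFDerivAt (fun y => exp (μ * y k))
      (exp (μ * y k) • μ • (EuclideanSpace.proj k : EuclideanSpace ℝ (Fin d) →L[ℝ] ℝ)) y :=
    ((EuclideanSpace.proj k : EuclideanSpace ℝ (Fin d) →L[ℝ] ℝ).hasFDerivAt.const_mul μ).exp
  have hpartial (i : Fin d) (y : EuclideanSpace ℝ (Fin d)) :
      fderiv ℝ (fun y => exp (μ * y k)) y (EuclideanSpace.single i (1 : ℝ))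
        = if k = i then exp (μ * y k) * μ else 0 := by
    simp [(hexp y).fderiv]
  simp only [divA, hpartial]
  rw [Finset.sum_eq_single k (fun i _ hik => by simp [hik.symm]) (by simp)]
  simp only [if_true]
  rw [fderiv_fun_mul ha ((hexp x).differentiableAt.mul_const μ), ((hexp x).mul_const μ).fderiv]
  simp only [add_apply, smul_apply, PiLp.proj_apply, PiLp.single_eq_same, smul_eq_mul, mul_one]
  ring

lemma exists_forall_divA_exp_pos {Ω : Set (EuclideanSpace ℝ (Fin d))}
    (ha : ∀ x ∈ Ω, DifferentiableAt ℝ a x) (hapos : ∀ x ∈ Ω, 0 < a x) {k : Fin d} {Λ : ℝ}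
    (hΛ : ∀ x ∈ Ω, -(Λ * a x) ≤ fderiv ℝ a x (EuclideanSpace.single k (1 : ℝ))) :
    ∃ μ : ℝ, ∀ x ∈ Ω, 0 < divA a (fun y => exp (μ * y k)) x := by
  refine ⟨|Λ| + 1, fun x hx => ?_⟩
  have hμ : Λ * a x < (|Λ| + 1) * a x :=
    mul_lt_mul_of_pos_right ((le_abs_self Λ).trans_lt (lt_add_one _)) (hapos x hx)
  have hfactor : 0 < fderiv ℝ a x (EuclideanSpace.single k (1 : ℝ)) + (|Λ| + 1) * a x := by
    linarith [hΛ x hx]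
  rw [divA_exp_const_mul (ha x hx)]
  positivity

end DivA

lemma exists_isLocalMax_add_smul {X : Type*} [TopologicalSpace X] {Ω : Set X} (hΩo : IsOpen Ω)
    (hΩc : IsCompact (closure Ω)) {w h : X → ℝ} (hw : ContinuousOn w (closure Ω))
    (hh : ContinuousOn h (closure Ω)) (hpos : ∀ y ∈ closure Ω, 0 < h y)
    (hbdry : ∀ x ∈ frontier Ω, w x ≤ 0) {x : X} (hx : x ∈ Ω) (hwx : 0 < w x) :
    ∃ ε : ℝ, 0 < ε ∧ ∃ p ∈ Ω, 0 < w p ∧ IsLocalMax (w + ε • h) p := by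
  have hx_closure : x ∈ closure Ω := subset_closure hx
  obtain ⟨q, hq_mem, hq⟩ := hΩc.exists_isMaxOn ⟨x, hx_closure⟩ hh
  -- This choice of `ε` makes `ε * h ≤ w x` on `closure Ω`.
  obtain ⟨ε, hε, hεq⟩ : ∃ ε : ℝ, 0 < ε ∧ ε * h q = w x :=
    ⟨w x / h q, div_pos hwx (hpos q hq_mem), div_mul_cancel₀ _ (hpos q hq_mem).ne'⟩
  obtain ⟨p, hp_closure, hp⟩ := hΩc.exists_isMaxOn ⟨x, hx_closure⟩ (hw.add (hh.const_smul ε))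
  have hwp : 0 < w p := by
    have hmax : w x + ε * h x ≤ w p + ε * h p := hp hx_closure
    have hle : ε * h p ≤ ε * h q := mul_le_mul_of_nonneg_left (hq hp_closure) hε.le
    linarith [mul_pos hε (hpos x hx_closure)]
  have hp_mem : p ∈ Ω := by
    by_contra hpn
    exact hwp.not_ge (hbdry p (hΩo.frontier_eq ▸ ⟨hp_closure, hpn⟩))
  exact ⟨ε, hε, p, hp_mem, hwp,
    hp.isLocalMax (mem_of_superset (hΩo.mem_nhds hp_mem) subset_closure)⟩

section MaximumPrinciple

variable {d : ℕ} {Ω : Set (EuclideanSpace ℝ (Fin d))} {a u v w h : EuclideanSpace ℝ (Fin d) → ℝ}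

lemma nonpos_of_divA_nonneg_of_divA_pos (hΩo : IsOpen Ω) (hΩb : Bornology.IsBounded Ω)
    (ha : ∀ x ∈ Ω, DifferentiableAt ℝ a x) (ha_nonneg : ∀ x ∈ Ω, 0 ≤ a x)
    (hh2 : ContDiffOn ℝ 2 h Ω) (hh : ContinuousOn h (closure Ω))
    (hhpos : ∀ x ∈ closure Ω, 0 < h x) (hhdiv : ∀ x ∈ Ω, 0 < divA a h x)
    (hw2 : ContDiffOn ℝ 2 w Ω) (hw : ContinuousOn w (closure Ω))
    (hwdiv : ∀ x ∈ Ω, 0 < w x → 0 ≤ divA a w x) (hbdry : ∀ x ∈ frontier Ω, w x ≤ 0) :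
    ∀ x ∈ Ω, w x ≤ 0 := by
  intro x hx
  by_contra! hwx
  obtain ⟨ε, hε, p, hp, hwp, hmax⟩ :=
    exists_isLocalMax_add_smul hΩo hΩb.isCompact_closure hw hh hhpos hbdry hx hwx
  have hw2p : ContDiffAt ℝ 2 w p := hw2.contDiffAt (hΩo.mem_nhds hp)
  have hεh2p : ContDiffAt ℝ 2 (ε • h) p := (hh2.contDiffAt (hΩo.mem_nhds hp)).const_smul ε
  have hnonpos : divA a (w + ε • h) p ≤ 0 :=
    divA_nonpos_of_isLocalMax (ha p hp) (ha_nonneg p hp) (hw2p.add hεh2p) hmax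
  rw [divA_add (ha p hp) hw2p hεh2p, divA_const_smul] at hnonpos
  exact hnonpos.not_gt (add_pos_of_nonneg_of_pos (hwdiv p hp hwp) (mul_pos hε (hhdiv p hp)))

lemma nonpos_of_divA_nonneg (hΩo : IsOpen Ω) (hΩb : Bornology.IsBounded Ω)
    (ha : ∀ x ∈ Ω, DifferentiableAt ℝ a x) (hapos : ∀ x ∈ Ω, 0 < a x) {k : Fin d} {Λ : ℝ}
    (hΛ : ∀ x ∈ Ω, -(Λ * a x) ≤ fderiv ℝ a x (EuclideanSpace.single k (1 : ℝ)))
    (hw2 : ContDiffOn ℝ 2 w Ω) (hw : ContinuousOn w (closure Ω))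
    (hwdiv : ∀ x ∈ Ω, 0 < w x → 0 ≤ divA a w x) (hbdry : ∀ x ∈ frontier Ω, w x ≤ 0) :
    ∀ x ∈ Ω, w x ≤ 0 := by
  obtain ⟨μ, hμ⟩ := exists_forall_divA_exp_pos ha hapos hΛ
  have hexp : ContDiff ℝ 2 fun y : EuclideanSpace ℝ (Fin d) => exp (μ * y k) := by fun_prop
  exact nonpos_of_divA_nonneg_of_divA_pos hΩo hΩb ha (fun x hx => (hapos x hx).le)
    hexp.contDiffOn hexp.continuous.continuousOn (fun _ _ => exp_pos _) hμ hw2 hw hwdiv hbdry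

theorem le_of_divA_sub_le_divA_sub (hΩo : IsOpen Ω) (hΩb : Bornology.IsBounded Ω)
    (ha : ∀ x ∈ Ω, DifferentiableAt ℝ a x) (hapos : ∀ x ∈ Ω, 0 < a x) {k : Fin d} {Λ : ℝ}
    (hΛ : ∀ x ∈ Ω, -(Λ * a x) ≤ fderiv ℝ a x (EuclideanSpace.single k (1 : ℝ)))
    {f : EuclideanSpace ℝ (Fin d) → ℝ → ℝ} (hf : ∀ x ∈ Ω, Monotone (f x))
    (hu2 : ContDiffOn ℝ 2 u Ω) (hu : ContinuousOn u (closure Ω))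
    (hv2 : ContDiffOn ℝ 2 v Ω) (hv : ContinuousOn v (closure Ω))
    (huv : ∀ x ∈ Ω, divA a v x - f x (v x) ≤ divA a u x - f x (u x))
    (hbdry : ∀ x ∈ frontier Ω, u x ≤ v x) :
    ∀ x ∈ Ω, u x ≤ v x := by
  have hdiv : ∀ x ∈ Ω, 0 < (u - v) x → 0 ≤ divA a (u - v) x := by
    intro x hx hpos
    have hmono : f x (v x) ≤ f x (u x) := hf x hx (sub_pos.mp hpos).le
    rw [divA_sub (ha x hx) (hu2.contDiffAt (hΩo.mem_nhds hx)) (hv2.contDiffAt (hΩo.mem_nhds hx))]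
    linarith [huv x hx]
  have hnonpos : ∀ x ∈ Ω, (u - v) x ≤ 0 :=
    nonpos_of_divA_nonneg hΩo hΩb ha hapos hΛ (hu2.sub hv2) (hu.sub hv) hdiv
      fun x hx => sub_nonpos.mpr (hbdry x hx)
  exact fun x hx => sub_nonpos.mp (hnonpos x hx)

end MaximumPrinciple

lemma exists_forall_neg_mul_le_fderiv_apply {E : Type*} [NormedAddCommGroup E] [NormedSpace ℝ E]
    {Ω U : Set E} {a : E → ℝ} {a₀ : ℝ} (hΩc : IsCompact (closure Ω)) (hU : IsOpen U)
    (hΩU : closure Ω ⊆ U) (ha : ContDiffOn ℝ 1 a U) (ha₀ : 0 < a₀) (hle : ∀ x ∈ Ω, a₀ ≤ a x)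
    (e : E) : ∃ Λ : ℝ, ∀ x ∈ Ω, -(Λ * a x) ≤ fderiv ℝ a x e := by
  have hcont : ContinuousOn (fun x => fderiv ℝ a x e) (closure Ω) :=
    ((ha.continuousOn_fderiv_of_isOpen hU le_rfl).mono hΩU).clm_apply continuousOn_const
  obtain ⟨C, hC⟩ := hΩc.exists_bound_of_continuousOn hcont
  refine ⟨C / a₀, fun x hx => ?_⟩
  have hCx : |fderiv ℝ a x e| ≤ C := hC x (subset_closure hx)
  have hC₀ : 0 ≤ C / a₀ := div_nonneg ((abs_nonneg _).trans hCx) ha₀.le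
  calc -(C / a₀ * a x) ≤ -(C / a₀ * a₀) :=
        neg_le_neg (mul_le_mul_of_nonneg_left (hle x hx) hC₀)
    _ = -C := by rw [div_mul_cancel₀ _ ha₀.ne']
    _ ≤ fderiv ℝ a x e := (abs_le.mp hCx).1

theorem stmt4_general {d : ℕ} {Ω : Set (EuclideanSpace ℝ (Fin d))}
    {a u v : EuclideanSpace ℝ (Fin d) → ℝ} (hΩo : IsOpen Ω)
    (hΩb : Bornology.IsBounded Ω) (ha : ∀ x ∈ Ω, DifferentiableAt ℝ a x)
    (hapos : ∀ x ∈ Ω, 0 < a x) {k : Fin d} {Λ : ℝ}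
    (hΛ : ∀ x ∈ Ω, -(Λ * a x) ≤ fderiv ℝ a x (EuclideanSpace.single k (1 : ℝ)))
    {f : EuclideanSpace ℝ (Fin d) → ℝ → ℝ} (hf : ∀ x ∈ Ω, Monotone (f x))
    (hu2 : ContDiffOn ℝ 2 u Ω) (hu : ContinuousOn u (closure Ω))
    (hv2 : ContDiffOn ℝ 2 v Ω) (hv : ContinuousOn v (closure Ω))
    (hequ : ∀ x ∈ Ω, divA a u x = f x (u x)) (heqv : ∀ x ∈ Ω, divA a v x = f x (v x))
    (hbdry : ∀ x ∈ frontier Ω, u x = v x) :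
    ∀ x ∈ Ω, u x = v x := by
  have hresidual : ∀ x ∈ Ω, divA a u x - f x (u x) = divA a v x - f x (v x) := fun x hx => by
    rw [sub_eq_zero.mpr (hequ x hx), sub_eq_zero.mpr (heqv x hx)]
  have huv : ∀ x ∈ Ω, u x ≤ v x := le_of_divA_sub_le_divA_sub hΩo hΩb ha hapos hΛ hf
    hu2 hu hv2 hv (fun x hx => (hresidual x hx).ge) fun x hx => (hbdry x hx).le
  have hvu : ∀ x ∈ Ω, v x ≤ u x := le_of_divA_sub_le_divA_sub hΩo hΩb ha hapos hΛ hf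
    hv2 hv hu2 hu (fun x hx => (hresidual x hx).le) fun x hx => (hbdry x hx).ge
  exact fun x hx => le_antisymm (huv x hx) (hvu x hx)

theorem stmt4 {d : ℕ} (hd : 1 ≤ d) (Ω U : Set (EuclideanSpace ℝ (Fin d)))
    (hΩo : IsOpen Ω) (hΩb : Bornology.IsBounded Ω)
    (hU : IsOpen U) (hUΩ : closure Ω ⊆ U)
    (a b c : EuclideanSpace ℝ (Fin d) → ℝ)
    (ha : ContDiffOn ℝ 1 a U) (a₀ : ℝ) (ha₀ : 0 < a₀) (halb : ∀ x ∈ Ω, a₀ ≤ a x)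
    (hbcont : ContinuousOn b (closure Ω)) (hccont : ContinuousOn c (closure Ω))
    (θ : ℝ) (hθneg : θ < 0) (hθne : θ ≠ -1)
    (hbnn : ∀ x ∈ Ω, 0 ≤ b x) (hcnn : ∀ x ∈ Ω, 0 ≤ c x)
    (Ψ₁ Ψ₂ : EuclideanSpace ℝ (Fin d) → ℝ)
    (hΨ₁2 : ContDiffOn ℝ 2 Ψ₁ Ω) (hΨ₁1 : ContDiffOn ℝ 1 Ψ₁ (closure Ω))
    (hΨ₂2 : ContDiffOn ℝ 2 Ψ₂ Ω) (hΨ₂1 : ContDiffOn ℝ 1 Ψ₂ (closure Ω))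
    (heq₁ : ∀ x ∈ Ω, divA a Ψ₁ x = b x * Ψ₁ x + c x * sTheta θ (Ψ₁ x))
    (heq₂ : ∀ x ∈ Ω, divA a Ψ₂ x = b x * Ψ₂ x + c x * sTheta θ (Ψ₂ x))
    (hbdry : ∀ x ∈ frontier Ω, Ψ₁ x = Ψ₂ x) :
    ∀ x ∈ Ω, Ψ₁ x = Ψ₂ x := by
  obtain ⟨Λ, hΛ⟩ := exists_forall_neg_mul_le_fderiv_apply hΩb.isCompact_closure hU hUΩ ha ha₀ halb
    (EuclideanSpace.single ⟨0, hd⟩ (1 : ℝ))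
  have ha_diff : ∀ x ∈ Ω, DifferentiableAt ℝ a x := fun x hx =>
    (ha.differentiableOn one_ne_zero).differentiableAt (hU.mem_nhds (hUΩ (subset_closure hx)))
  have hmono : ∀ x ∈ Ω, Monotone fun z => b x * z + c x * sTheta θ z := fun x hx =>
    (monotone_id.const_mul (hbnn x hx)).add ((monotone_sTheta hθneg.le).const_mul (hcnn x hx))
  exact stmt4_general hΩo hΩb ha_diff (fun x hx => ha₀.trans_le (halb x hx)) hΛ hmono
    hΨ₁2 hΨ₁1.continuousOn hΨ₂2 hΨ₂1.continuousOn heq₁ heq₂ hbdry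
end

section
/- Assume θ ≥ 0, b ≥ 0 and c ≤ 0 on Ω. If Ψ₁, Ψ₂ ∈ C²(Ω) ∩ C¹(cl(Ω)) are classical solutions of ∇·(a∇Ψ) = bΨ + cΨ^{-θ} in Ω with Ψ₁ > 0 and Ψ₂ > 0 on cl(Ω) and Ψ₁ = Ψ₂ on ∂Ω, then Ψ₁ = Ψ₂ everywhere in Ω. -/
/-!
Where `w = Ψ₁ - Ψ₂` is positive, monotonicity of `z ↦ b z + c z ^ (-θ)` gives `∇·(a∇w) ≥ 0`,
that is, `Δw + (∇a / a)·∇w ≥ 0`. Suppose `w x₀ > 0` for some `x₀ ∈ Ω`. Since `w = 0` on `∂Ω`,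
the set `K = {w ≥ w x₀ / 2}` is a compact subset of `Ω`, so the drift `∇a / a` is bounded on
`K`, and `h = exp ⟪p, ·⟫` satisfies `Δh + (∇a / a)·∇h > 0` on `K` once `‖p‖` exceeds that bound.
For small `ε > 0` the maximum of `w + ε h` over `closure Ω` is attained in `K`, where
`Δ(w + ε h) + (∇a / a)·∇(w + ε h) > 0`, which is impossible at an interior maximum.
-/

open Real Set MeasureTheory Filter Topology

section LocalMax

variable {E : Type*} [NormedAddCommGroup E] [NormedSpace ℝ E]

lemma deriv_deriv_nonpos_of_isLocalMax_s10 {g : ℝ → ℝ} {t : ℝ} (hg : ContinuousAt g t)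
    (hmax : IsLocalMax g t) : deriv (deriv g) t ≤ 0 := by
  by_contra! hpos
  have hmin : IsLocalMin g t := isLocalMin_of_deriv_deriv_pos hpos hmax.deriv_eq_zero hg
  have hconst : g =ᶠ[𝓝 t] fun _ => g t := by
    filter_upwards [hmax, hmin] with s hle hge
    exact le_antisymm hle hge
  refine hpos.ne' ?_
  simp [hconst.deriv.deriv_eq]

lemma deriv_deriv_comp_add_smul {u : E → ℝ} {x : E} (hu : ContDiffAt ℝ 2 u x) (e : E) :
    deriv (deriv fun t : ℝ => u (x + t • e)) 0 = iteratedFDeriv ℝ 2 u x ![e, e] := by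
  have hline : Tendsto (fun t : ℝ => x + t • e) (𝓝 0) (𝓝 x) :=
    Continuous.tendsto' (by fun_prop) _ _ (by simp)
  have hderiv : deriv (fun t : ℝ => u (x + t • e)) =ᶠ[𝓝 0]
      fun t => iteratedFDeriv ℝ 1 u (x + t • e) fun _ => e := by
    filter_upwards [hline.eventually (hu.eventually (by simp))] with t ht
    rw [(ht.differentiableAt two_ne_zero).deriv_comp_add_smul, iteratedFDeriv_one_apply]
  rw [hderiv.deriv_eq, ContDiffAt.deriv_fderiv_add_smul (by simpa [one_add_one_eq_two] using hu)]
  simp [iteratedFDeriv_two_apply]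

lemma iteratedFDeriv_two_nonpos_of_isLocalMax {u : E → ℝ} {x : E} (hu : ContDiffAt ℝ 2 u x)
    (hmax : IsLocalMax u x) (e : E) : iteratedFDeriv ℝ 2 u x ![e, e] ≤ 0 := by
  have hline : ContinuousAt (fun t : ℝ => x + t • e) 0 := by fun_prop
  rw [← deriv_deriv_comp_add_smul hu e]
  refine deriv_deriv_nonpos_of_isLocalMax_s10 ?_ ?_
  · exact ContinuousAt.comp (by simpa using hu.continuousAt) hline
  · exact IsLocalMax.comp_continuous (g := fun t : ℝ => x + t • e) (b := 0)
      (by simpa using hmax) hline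

end LocalMax

section Perturbation

variable {α : Type*} [TopologicalSpace α]

lemma exists_pos_exists_isMaxOn_add_const_mul {K : Set α} (hK : IsCompact K) {w h : α → ℝ}
    (hw : ContinuousOn w K) (hh : ContinuousOn h K) {x₀ : α} (hx₀ : x₀ ∈ K) {δ : ℝ} (hδ : 0 < δ) :
    ∃ ε > 0, ∃ x ∈ K, IsMaxOn (fun y => w y + ε * h y) K x ∧ w x₀ - δ < w x := by
  obtain ⟨M, hM⟩ := hK.exists_bound_of_continuousOn hh
  have hM₀ : 0 ≤ M := (norm_nonneg _).trans (hM x₀ hx₀)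
  set ε : ℝ := δ / (2 * M + 1)
  have hε : 0 < ε := by positivity
  have hεM : 2 * (ε * M) + ε = δ := by simp only [ε]; field_simp
  obtain ⟨x, hx, hmax⟩ := hK.exists_isMaxOn ⟨x₀, hx₀⟩ (hw.add (continuousOn_const.mul hh))
  have hmax₀ : w x₀ + ε * h x₀ ≤ w x + ε * h x := hmax hx₀
  have hlow : -(ε * M) ≤ ε * h x₀ := by
    simpa using mul_le_mul_of_nonneg_left (abs_le.mp (hM x₀ hx₀)).1 hε.le
  have hupp : ε * h x ≤ ε * M := mul_le_mul_of_nonneg_left (abs_le.mp (hM x hx)).2 hε.le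
  exact ⟨ε, hε, x, hx, hmax, by linarith⟩

end Perturbation

section DriftLaplacian

open InnerProductSpace
open scoped Laplacian Gradient

variable {E : Type*} [NormedAddCommGroup E] [InnerProductSpace ℝ E]

lemma hasFDerivAt_exp_inner (p x : E) :
    HasFDerivAt (fun y : E => rexp ⟪p, y⟫_ℝ) (rexp ⟪p, x⟫_ℝ • innerSL ℝ p) x :=
  (innerSL ℝ p).hasFDerivAt.exp

lemma iteratedFDeriv_two_exp_inner (p x e : E) :
    iteratedFDeriv ℝ 2 (fun y : E => rexp ⟪p, y⟫_ℝ) x ![e, e] = ⟪p, e⟫_ℝ ^ 2 * rexp ⟪p, x⟫_ℝ := by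
  have hfderiv : fderiv ℝ (fun y : E => rexp ⟪p, y⟫_ℝ) = fun y => rexp ⟪p, y⟫_ℝ • innerSL ℝ p :=
    funext fun y => (hasFDerivAt_exp_inner p y).fderiv
  rw [iteratedFDeriv_two_apply, hfderiv,
    ((hasFDerivAt_exp_inner p x).smul_const (innerSL ℝ p)).fderiv]
  simp only [ContinuousLinearMap.smulRight_apply, smul_apply, innerSL_apply_apply, smul_eq_mul,
    Matrix.cons_val_zero, Matrix.cons_val_one]
  ring

lemma continuousOn_gradient_of_isOpen [CompleteSpace E] {a : E → ℝ} {Ω : Set E} (hΩ : IsOpen Ω)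
    (ha : ContDiffOn ℝ 1 a Ω) : ContinuousOn (∇ a) Ω :=
  (toDual ℝ E).symm.continuous.comp_continuousOn (ha.continuousOn_fderiv_of_isOpen hΩ le_rfl)

variable [FiniteDimensional ℝ E]

lemma laplacian_nonpos_of_isLocalMax {u : E → ℝ} {x : E} (hu : ContDiffAt ℝ 2 u x)
    (hmax : IsLocalMax u x) : Δ u x ≤ 0 := by
  rw [laplacian_eq_iteratedFDeriv_stdOrthonormalBasis]
  exact Finset.sum_nonpos fun i _ => iteratedFDeriv_two_nonpos_of_isLocalMax hu hmax _

lemma laplacian_exp_inner (p x : E) :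
    Δ (fun y : E => rexp ⟪p, y⟫_ℝ) x = ‖p‖ ^ 2 * rexp ⟪p, x⟫_ℝ := by
  simp only [laplacian_eq_iteratedFDeriv_stdOrthonormalBasis, iteratedFDeriv_two_exp_inner,
    ← Finset.sum_mul, OrthonormalBasis.sum_sq_inner_left]

/-- The Laplacian with drift `Δu + X·∇u`. Dividing `∇·(a∇u)` by `a` gives this operator with
drift `∇a / a`. -/
noncomputable def driftLaplacian (X : E → E) (u : E → ℝ) (x : E) : ℝ :=
  Δ u x + fderiv ℝ u x (X x)

variable {X : E → E} {u v : E → ℝ} {x : E}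

lemma driftLaplacian_add (hu : ContDiffAt ℝ 2 u x) (hv : ContDiffAt ℝ 2 v x) :
    driftLaplacian X (u + v) x = driftLaplacian X u x + driftLaplacian X v x := by
  rw [driftLaplacian, hu.laplacian_add hv,
    fderiv_add (hu.differentiableAt two_ne_zero) (hv.differentiableAt two_ne_zero), add_apply]
  simp only [driftLaplacian]
  ring

lemma driftLaplacian_sub (hu : ContDiffAt ℝ 2 u x) (hv : ContDiffAt ℝ 2 v x) :
    driftLaplacian X (u - v) x = driftLaplacian X u x - driftLaplacian X v x := by
  rw [driftLaplacian, hu.laplacian_sub hv,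
    fderiv_sub (hu.differentiableAt two_ne_zero) (hv.differentiableAt two_ne_zero), sub_apply]
  simp only [driftLaplacian]
  ring

lemma driftLaplacian_const_smul (r : ℝ) (hu : ContDiffAt ℝ 2 u x) :
    driftLaplacian X (r • u) x = r * driftLaplacian X u x := by
  rw [driftLaplacian, laplacian_smul r hu,
    fderiv_const_smul (hu.differentiableAt two_ne_zero), smul_apply]
  simp only [driftLaplacian, smul_eq_mul]
  ring

lemma driftLaplacian_nonpos_of_isLocalMax (hu : ContDiffAt ℝ 2 u x) (hmax : IsLocalMax u x) :
    driftLaplacian X u x ≤ 0 := by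
  simpa [driftLaplacian, hmax.fderiv_eq_zero] using laplacian_nonpos_of_isLocalMax hu hmax

lemma driftLaplacian_exp_inner (X : E → E) (p x : E) :
    driftLaplacian X (fun y : E => rexp ⟪p, y⟫_ℝ) x =
      (‖p‖ ^ 2 + ⟪p, X x⟫_ℝ) * rexp ⟪p, x⟫_ℝ := by
  rw [driftLaplacian, laplacian_exp_inner, (hasFDerivAt_exp_inner p x).fderiv, smul_apply,
    innerSL_apply_apply, smul_eq_mul]
  ring

lemma exists_forall_driftLaplacian_exp_inner_pos [Nontrivial E] {K : Set E}
    (hX : Bornology.IsBounded (X '' K)) :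
    ∃ p : E, ∀ x ∈ K, 0 < driftLaplacian X (fun y : E => rexp ⟪p, y⟫_ℝ) x := by
  obtain ⟨C, hC⟩ := hX.exists_norm_le
  obtain ⟨p, hp⟩ := NormedSpace.exists_lt_norm ℝ E (max 0 C)
  obtain ⟨hp₀, hpC⟩ := max_lt_iff.mp hp
  refine ⟨p, fun x hx => ?_⟩
  have hXx : ‖X x‖ < ‖p‖ := (hC _ (mem_image_of_mem X hx)).trans_lt hpC
  have hinner : -(‖p‖ * ‖X x‖) ≤ ⟪p, X x⟫_ℝ := (abs_le.mp (abs_real_inner_le_norm p (X x))).1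
  rw [driftLaplacian_exp_inner]
  exact mul_pos (by nlinarith) (Real.exp_pos _)

theorem nonpos_of_driftLaplacian_nonneg [Nontrivial E] {Ω : Set E} (hΩo : IsOpen Ω)
    (hΩb : Bornology.IsBounded Ω) (hX : ContinuousOn X Ω) {w : E → ℝ} (hw : ContDiffOn ℝ 2 w Ω)
    (hwc : ContinuousOn w (closure Ω))
    (hL : ∀ x ∈ Ω, 0 < w x → 0 ≤ driftLaplacian X w x) (hbdry : ∀ x ∈ frontier Ω, w x ≤ 0) :
    ∀ x ∈ Ω, w x ≤ 0 := by
  intro x₀ hx₀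
  by_contra! hpos
  have hcompact : IsCompact (closure Ω) := hΩb.isCompact_closure
  set K : Set E := {x ∈ closure Ω | w x₀ / 2 ≤ w x}
  have hK : IsCompact K :=
    hcompact.of_isClosed_subset
      (hwc.preimage_isClosed_of_isClosed isClosed_closure isClosed_Ici) (sep_subset _ _)
  have hKΩ : K ⊆ Ω := by
    rintro x ⟨hx, hle⟩
    by_contra hxΩ
    have : x ∈ frontier Ω := ⟨hx, by rwa [hΩo.interior_eq]⟩
    linarith [hbdry x this]
  obtain ⟨p, hp⟩ := exists_forall_driftLaplacian_exp_inner_pos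
    (hK.image_of_continuousOn (hX.mono hKΩ)).isBounded
  set h : E → ℝ := fun y => rexp ⟪p, y⟫_ℝ
  have hh : ContDiff ℝ 2 h := (innerSL ℝ p).contDiff.exp
  obtain ⟨ε, hε, x, hx, hmax, hwx⟩ := exists_pos_exists_isMaxOn_add_const_mul hcompact hwc
    hh.continuous.continuousOn (subset_closure hx₀) (half_pos hpos)
  have hxK : x ∈ K := ⟨hx, by linarith⟩
  have hΩx : Ω ∈ 𝓝 x := hΩo.mem_nhds (hKΩ hxK)
  have hwx₂ : ContDiffAt ℝ 2 w x := hw.contDiffAt hΩx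
  have hlocal : IsLocalMax (w + ε • h) x := hmax.isLocalMax (mem_of_superset hΩx subset_closure)
  have hεh : ContDiffAt ℝ 2 (ε • h) x := contDiffAt_const.smul hh.contDiffAt
  have hle : driftLaplacian X (w + ε • h) x ≤ 0 :=
    driftLaplacian_nonpos_of_isLocalMax (hwx₂.add hεh) hlocal
  rw [driftLaplacian_add hwx₂ hεh, driftLaplacian_const_smul ε hh.contDiffAt] at hle
  linarith [hL x (hKΩ hxK) (by linarith), mul_pos hε (hp x hxK)]

end DriftLaplacian

section DivergenceForm

open InnerProductSpace
open scoped Laplacian Gradient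

variable {d : ℕ} {a u v : EuclideanSpace ℝ (Fin d) → ℝ} {x : EuclideanSpace ℝ (Fin d)}

lemma divA_eq_mul_laplacian_add_fderiv_gradient (ha : DifferentiableAt ℝ a x)
    (hu : ContDiffAt ℝ 2 u x) : divA a u x = a x * Δ u x + fderiv ℝ u x (∇ a x) := by
  set b := EuclideanSpace.basisFun (Fin d) ℝ
  have hdu : DifferentiableAt ℝ (fderiv ℝ u) x :=
    (hu.fderiv_right (m := 1) (by norm_num)).differentiableAt one_ne_zero
  have hterm (i : Fin d) : fderiv ℝ (fun y => a y * fderiv ℝ u y (b i)) x (b i) =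
      a x * iteratedFDeriv ℝ 2 u x ![b i, b i] + fderiv ℝ a x (b i) * fderiv ℝ u x (b i) := by
    rw [fderiv_fun_mul ha (hdu.clm_apply (differentiableAt_const _)),
      fderiv_clm_apply hdu (differentiableAt_const _)]
    simp [iteratedFDeriv_two_apply, mul_comm]
  have hgrad : ∑ i, fderiv ℝ a x (b i) * fderiv ℝ u x (b i) = fderiv ℝ u x (∇ a x) := by
    conv_rhs => rw [← b.sum_repr' (∇ a x), map_sum]
    simp [inner_gradient_right]
  calc divA a u x = ∑ i, fderiv ℝ (fun y => a y * fderiv ℝ u y (b i)) x (b i) := by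
        simp only [divA, b, EuclideanSpace.basisFun_apply]
    _ = a x * Δ u x + fderiv ℝ u x (∇ a x) := by
        rw [laplacian_eq_iteratedFDeriv_orthonormalBasis u b, Finset.mul_sum, ← hgrad,
          ← Finset.sum_add_distrib]
        exact Finset.sum_congr rfl fun i _ => hterm i

lemma divA_eq_mul_driftLaplacian (ha : DifferentiableAt ℝ a x) (hax : a x ≠ 0)
    (hu : ContDiffAt ℝ 2 u x) :
    divA a u x = a x * driftLaplacian (fun y => (a y)⁻¹ • ∇ a y) u x := by
  rw [divA_eq_mul_laplacian_add_fderiv_gradient ha hu, driftLaplacian, map_smul, smul_eq_mul,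
    mul_add, mul_inv_cancel_left₀ hax]

theorem le_of_divA_le (hd : 1 ≤ d) {Ω : Set (EuclideanSpace ℝ (Fin d))} (hΩo : IsOpen Ω)
    (hΩb : Bornology.IsBounded Ω) (ha : ContDiffOn ℝ 1 a Ω) (hapos : ∀ x ∈ Ω, 0 < a x)
    (hu : ContDiffOn ℝ 2 u Ω) (huc : ContinuousOn u (closure Ω))
    (hv : ContDiffOn ℝ 2 v Ω) (hvc : ContinuousOn v (closure Ω))
    (hle : ∀ x ∈ Ω, v x < u x → divA a v x ≤ divA a u x)
    (hbdry : ∀ x ∈ frontier Ω, u x ≤ v x) : ∀ x ∈ Ω, u x ≤ v x := by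
  have : Nonempty (Fin d) := ⟨⟨0, hd⟩⟩
  set X : EuclideanSpace ℝ (Fin d) → EuclideanSpace ℝ (Fin d) := fun y => (a y)⁻¹ • ∇ a y
  have hX : ContinuousOn X Ω :=
    (ha.continuousOn.inv₀ fun x hx => (hapos x hx).ne').smul
      (continuousOn_gradient_of_isOpen hΩo ha)
  have hL : ∀ x ∈ Ω, 0 < (u - v) x → 0 ≤ driftLaplacian X (u - v) x := by
    intro x hx hlt
    have hΩx : Ω ∈ 𝓝 x := hΩo.mem_nhds hx
    have hax : DifferentiableAt ℝ a x := (ha.contDiffAt hΩx).differentiableAt one_ne_zero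
    have hdiv : divA a v x ≤ divA a u x := hle x hx (sub_pos.mp hlt)
    rw [divA_eq_mul_driftLaplacian hax (hapos x hx).ne' (hv.contDiffAt hΩx),
      divA_eq_mul_driftLaplacian hax (hapos x hx).ne' (hu.contDiffAt hΩx)] at hdiv
    rw [driftLaplacian_sub (hu.contDiffAt hΩx) (hv.contDiffAt hΩx), sub_nonneg]
    exact le_of_mul_le_mul_left hdiv (hapos x hx)
  intro x hx
  exact sub_nonpos.mp (nonpos_of_driftLaplacian_nonneg hΩo hΩb hX (hu.sub hv) (huc.sub hvc) hL
    (fun y hy => sub_nonpos.mpr (hbdry y hy)) x hx)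

theorem le_of_le_divA_of_divA_le (hd : 1 ≤ d) {Ω : Set (EuclideanSpace ℝ (Fin d))}
    (hΩo : IsOpen Ω) (hΩb : Bornology.IsBounded Ω) (ha : ContDiffOn ℝ 1 a Ω)
    (hapos : ∀ x ∈ Ω, 0 < a x) {I : Set ℝ} {f : EuclideanSpace ℝ (Fin d) → ℝ → ℝ}
    (hf : ∀ x ∈ Ω, MonotoneOn (f x) I)
    (hu : ContDiffOn ℝ 2 u Ω) (huc : ContinuousOn u (closure Ω)) (huI : MapsTo u Ω I)
    (hv : ContDiffOn ℝ 2 v Ω) (hvc : ContinuousOn v (closure Ω)) (hvI : MapsTo v Ω I)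
    (hequ : ∀ x ∈ Ω, f x (u x) ≤ divA a u x) (heqv : ∀ x ∈ Ω, divA a v x ≤ f x (v x))
    (hbdry : ∀ x ∈ frontier Ω, u x ≤ v x) : ∀ x ∈ Ω, u x ≤ v x :=
  le_of_divA_le hd hΩo hΩb ha hapos hu huc hv hvc
    (fun x hx hlt => (heqv x hx).trans
      ((hf x hx (hvI hx) (huI hx) hlt.le).trans (hequ x hx))) hbdry

theorem stmt10_general (hd : 1 ≤ d) {Ω : Set (EuclideanSpace ℝ (Fin d))}
    (hΩo : IsOpen Ω) (hΩb : Bornology.IsBounded Ω) (ha : ContDiffOn ℝ 1 a Ω)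
    (hapos : ∀ x ∈ Ω, 0 < a x) {I : Set ℝ} {f : EuclideanSpace ℝ (Fin d) → ℝ → ℝ}
    (hf : ∀ x ∈ Ω, MonotoneOn (f x) I)
    (hu : ContDiffOn ℝ 2 u Ω) (huc : ContinuousOn u (closure Ω)) (huI : MapsTo u Ω I)
    (hv : ContDiffOn ℝ 2 v Ω) (hvc : ContinuousOn v (closure Ω)) (hvI : MapsTo v Ω I)
    (hequ : ∀ x ∈ Ω, divA a u x = f x (u x)) (heqv : ∀ x ∈ Ω, divA a v x = f x (v x))
    (hbdry : ∀ x ∈ frontier Ω, u x = v x) : ∀ x ∈ Ω, u x = v x := fun x hx =>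
  le_antisymm
    (le_of_le_divA_of_divA_le hd hΩo hΩb ha hapos hf hu huc huI hv hvc hvI
      (fun y hy => (hequ y hy).ge) (fun y hy => (heqv y hy).le) (fun y hy => (hbdry y hy).le) x hx)
    (le_of_le_divA_of_divA_le hd hΩo hΩb ha hapos hf hv hvc hvI hu huc huI
      (fun y hy => (heqv y hy).ge) (fun y hy => (hequ y hy).le) (fun y hy => (hbdry y hy).ge) x hx)

end DivergenceForm

lemma monotoneOn_const_mul_add_const_mul_rpow_neg {β γ θ : ℝ} (hβ : 0 ≤ β) (hγ : γ ≤ 0)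
    (hθ : 0 ≤ θ) : MonotoneOn (fun z : ℝ => β * z + γ * z ^ (-θ)) (Ioi 0) := by
  intro y hy z _ hyz
  exact add_le_add (mul_le_mul_of_nonneg_left hyz hβ) <| mul_le_mul_of_nonpos_left
    (Real.rpow_le_rpow_of_nonpos hy hyz (neg_nonpos.mpr hθ)) hγ

theorem stmt10 {d : ℕ} (hd : 1 ≤ d) (Ω U : Set (EuclideanSpace ℝ (Fin d)))
    (hΩo : IsOpen Ω) (hΩb : Bornology.IsBounded Ω)
    (hU : IsOpen U) (hUΩ : closure Ω ⊆ U)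
    (a b c : EuclideanSpace ℝ (Fin d) → ℝ)
    (ha : ContDiffOn ℝ 1 a U) (a₀ : ℝ) (ha₀ : 0 < a₀) (halb : ∀ x ∈ Ω, a₀ ≤ a x)
    (hbcont : ContinuousOn b (closure Ω)) (hccont : ContinuousOn c (closure Ω))
    (θ : ℝ) (hθ : 0 ≤ θ)
    (hbnn : ∀ x ∈ Ω, 0 ≤ b x) (hcnp : ∀ x ∈ Ω, c x ≤ 0)
    (Ψ₁ Ψ₂ : EuclideanSpace ℝ (Fin d) → ℝ)
    (hΨ₁2 : ContDiffOn ℝ 2 Ψ₁ Ω) (hΨ₁1 : ContDiffOn ℝ 1 Ψ₁ (closure Ω))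
    (hΨ₂2 : ContDiffOn ℝ 2 Ψ₂ Ω) (hΨ₂1 : ContDiffOn ℝ 1 Ψ₂ (closure Ω))
    (hΨ₁pos : ∀ x ∈ closure Ω, 0 < Ψ₁ x) (hΨ₂pos : ∀ x ∈ closure Ω, 0 < Ψ₂ x)
    (heq₁ : ∀ x ∈ Ω, divA a Ψ₁ x = b x * Ψ₁ x + c x * Ψ₁ x ^ (-θ))
    (heq₂ : ∀ x ∈ Ω, divA a Ψ₂ x = b x * Ψ₂ x + c x * Ψ₂ x ^ (-θ))
    (hbdry : ∀ x ∈ frontier Ω, Ψ₁ x = Ψ₂ x) :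
    ∀ x ∈ Ω, Ψ₁ x = Ψ₂ x :=
  stmt10_general hd hΩo hΩb (ha.mono (subset_closure.trans hUΩ))
    (fun x hx => ha₀.trans_le (halb x hx))
    (fun x hx => monotoneOn_const_mul_add_const_mul_rpow_neg (hbnn x hx) (hcnp x hx) hθ)
    hΨ₁2 hΨ₁1.continuousOn (fun x hx => hΨ₁pos x (subset_closure hx))
    hΨ₂2 hΨ₂1.continuousOn (fun x hx => hΨ₂pos x (subset_closure hx)) heq₁ heq₂ hbdry
end
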